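/- The number of arithmetic frieze patterns of width n equals the Catalan number C_{n+1} = (1/(n+2))·binomial(2n+2, n+1). -/

import Mathlib

/-- A closed Y-frieze pattern of width `n`: a staggered array `b i j` (row `k`
consists of entries `b i (i+k+2)`) satisfying the Y-diamond rule, with zeroth
row and `(n+1)`-th row of `0`s, a row of `-1`s below, nonzero intermediate
rows, and normalized to `0` outside the pattern. -/
structure ClosedYFrieze (n : ℕ) where
  b : ℤ → ℤ → ℚ
  diamond : ∀ i j : ℤ, 3 ≤ j - i → j - i ≤ (n : ℤ) + 3 →
    b i j * b (i + 1) (j + 1) = (1 + b (i + 1) j) * (1 + b i (j + 1))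
  topZero : ∀ i : ℤ, b i (i + 2) = 0
  botZero : ∀ i : ℤ, b i (i + (n : ℤ) + 3) = 0
  negRow : ∀ i : ℤ, b i (i + (n : ℤ) + 4) = -1
  rowsNonzero : ∀ k : ℕ, 1 ≤ k → k ≤ n → ∃ i : ℤ, b i (i + (k : ℤ) + 2) ≠ 0
  outside : ∀ i j : ℤ, j - i ≤ 1 ∨ (n : ℤ) + 5 ≤ j - i → b i j = 0

/-- All entries of the nonzero rows are positive rationals. -/
def ClosedYFrieze.Positive {n : ℕ} (P : ClosedYFrieze n) : Prop :=
  ∀ (i : ℤ) (k : ℕ), 1 ≤ k → k ≤ n → 0 < P.b i (i + (k : ℤ) + 2)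

/-- All entries of the nonzero rows are positive integers. -/
def ClosedYFrieze.Arithmetic {n : ℕ} (P : ClosedYFrieze n) : Prop :=
  ∀ (i : ℤ) (k : ℕ), 1 ≤ k → k ≤ n → ∃ m : ℕ, 0 < m ∧ P.b i (i + (k : ℤ) + 2) = (m : ℚ)

/-- A closed (Coxeter) frieze pattern of width `n`: a staggered array `a i j`
(row `k` consists of entries `a i (i+k+1)`) satisfying the diamond rule
`a_{i,j} a_{i+1,j+1} = 1 + a_{i,j+1} a_{i+1,j}`, bounded above and below by
rows of `1`s, and normalized to `0` outside. -/
structure ClosedFrieze (n : ℕ) where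
  a : ℤ → ℤ → ℚ
  diamond : ∀ i j : ℤ, 2 ≤ j - i → j - i ≤ (n : ℤ) + 1 →
    a i j * a (i + 1) (j + 1) = 1 + a i (j + 1) * a (i + 1) j
  topOne : ∀ i : ℤ, a i (i + 1) = 1
  botOne : ∀ i : ℤ, a i (i + (n : ℤ) + 2) = 1
  outside : ∀ i j : ℤ, j - i ≤ 0 ∨ (n : ℤ) + 3 ≤ j - i → a i j = 0

/-- All entries of the interior rows are positive integers. -/
def ClosedFrieze.Arithmetic {n : ℕ} (A : ClosedFrieze n) : Prop :=
  ∀ (i : ℤ) (k : ℕ), 1 ≤ k → k ≤ n → ∃ m : ℕ, 0 < m ∧ A.a i (i + (k : ℤ) + 1) = (m : ℚ)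

/-!
Two consecutive diagonals `x = a (-1) ·` and `y = a 0 ·` of an arithmetic frieze of width `n` give
lattice points `(x j, y j)`, `0 ≤ j ≤ n + 2`, in the closed first quadrant, and the diamond rule
says exactly that consecutive points have determinant `1`. So a frieze is a path of Farey neighbours
from `(1, 0)` to `(0, 1)` with `n + 1` interior points. Conversely such a path, continued
antiperiodically, recovers the frieze as `a i j = det (v i, v j)`, the diamond rule being a Plücker
relation.

A nonempty path between Farey neighbours `u` and `v` passes through the mediant `u + v`, exactly
once. Splitting it there, as in the Stern–Brocot tree, identifies the paths with binary trees whose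
nodes are the interior points, and these are counted by the Catalan numbers.
-/

section Wedge

variable {R : Type*} [CommRing R]

/-- The determinant of the `2 × 2` matrix with rows `v` and `w`. -/
def wedge (v w : R × R) : R := v.1 * w.2 - v.2 * w.1

theorem wedge_self (v : R × R) : wedge v v = 0 := by
  simp only [wedge]; ring

theorem wedge_swap (v w : R × R) : wedge w v = -wedge v w := by
  simp only [wedge]; ring

theorem wedge_neg_left (v w : R × R) : wedge (-v) w = -wedge v w := by
  simp only [wedge, Prod.fst_neg, Prod.snd_neg]; ring

theorem wedge_neg_right (v w : R × R) : wedge v (-w) = -wedge v w := by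
  simp only [wedge, Prod.fst_neg, Prod.snd_neg]; ring

theorem wedge_self_add_right (v w : R × R) : wedge v (v + w) = wedge v w := by
  simp only [wedge, Prod.fst_add, Prod.snd_add]; ring

theorem wedge_add_self_left (v w : R × R) : wedge (v + w) w = wedge v w := by
  simp only [wedge, Prod.fst_add, Prod.snd_add]; ring

theorem wedge_plucker (a b c d : R × R) :
    wedge a c * wedge b d = wedge a b * wedge c d + wedge a d * wedge b c := by
  simp only [wedge]; ring

theorem eq_wedge_smul_add_wedge_smul {u v : R × R} (huv : wedge u v = 1) (w : R × R) :
    w = wedge w v • u + wedge u w • v := by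
  ext <;> simp only [wedge, Prod.fst_add, Prod.snd_add, Prod.smul_fst, Prod.smul_snd,
    smul_eq_mul] at huv ⊢
  · linear_combination -w.1 * huv
  · linear_combination -w.2 * huv

end Wedge

section FareyPaths

variable {u v w x : ℤ × ℤ} {L L₁ L₂ : List (ℤ × ℤ)}

/-- `v` and `w` lie in the closed first quadrant and `w` has strictly larger slope than `v`. -/
structure SlopeLT (v w : ℤ × ℤ) : Prop where
  nonneg_left : 0 ≤ v
  nonneg_right : 0 ≤ w
  wedge_pos : 0 < wedge v w

theorem SlopeLT.trans (huv : SlopeLT u v) (hvw : SlopeLT v w) : SlopeLT u w := by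
  refine ⟨huv.nonneg_left, hvw.nonneg_right, ?_⟩
  obtain ⟨⟨-, hu₂⟩, ⟨hv₁, hv₂⟩, huv⟩ := huv
  obtain ⟨-, ⟨hw₁, -⟩, hvw⟩ := hvw
  have hu₁ : 0 < u.1 :=
    pos_of_mul_pos_left ((mul_nonneg hu₂ hv₁).trans_lt (sub_pos.mp huv)) hv₂
  have hconvex : v.1 * wedge u w = u.1 * wedge v w + w.1 * wedge u v := by
    simp only [wedge]; ring
  refine pos_of_mul_pos_right (a := v.1) ?_ hv₁
  rw [hconvex]
  exact add_pos_of_pos_of_nonneg (mul_pos hu₁ hvw) (mul_nonneg hw₁ huv.le)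

instance : IsTrans (ℤ × ℤ) SlopeLT := ⟨fun _ _ _ => SlopeLT.trans⟩

/-- Lattice points of the closed first quadrant spanning a unimodular parallelogram: the vectors of
denominators and numerators of two neighbouring terms of a Farey sequence. -/
structure FareyNeighbors (v w : ℤ × ℤ) : Prop where
  nonneg_left : 0 ≤ v
  nonneg_right : 0 ≤ w
  wedge_eq_one : wedge v w = 1

namespace FareyNeighbors

theorem slopeLT (h : FareyNeighbors v w) : SlopeLT v w :=
  ⟨h.nonneg_left, h.nonneg_right, h.wedge_eq_one ▸ one_pos⟩

theorem mediant_right (h : FareyNeighbors u v) : FareyNeighbors u (u + v) :=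
  ⟨h.nonneg_left, add_nonneg h.nonneg_left h.nonneg_right,
    (wedge_self_add_right u v).trans h.wedge_eq_one⟩

theorem mediant_left (h : FareyNeighbors u v) : FareyNeighbors (u + v) v :=
  ⟨add_nonneg h.nonneg_left h.nonneg_right, h.nonneg_right,
    (wedge_add_self_left u v).trans h.wedge_eq_one⟩

end FareyNeighbors

/-- `L` lists the interior points of a path from `u` to `v` whose steps join Farey neighbours. -/
def IsFareyPath (u v : ℤ × ℤ) (L : List (ℤ × ℤ)) : Prop :=
  (u :: L ++ [v]).IsChain FareyNeighbors

theorem isFareyPath_nil : IsFareyPath u v [] ↔ FareyNeighbors u v :=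
  List.isChain_pair

theorem isFareyPath_cons : IsFareyPath u v (w :: L) ↔ FareyNeighbors u w ∧ IsFareyPath w v L :=
  List.isChain_cons_cons

theorem isFareyPath_append_cons :
    IsFareyPath u v (L₁ ++ w :: L₂) ↔ IsFareyPath u w L₁ ∧ IsFareyPath w v L₂ := by
  simpa only [IsFareyPath, List.cons_append, List.append_assoc] using
    List.isChain_cons_split (R := FareyNeighbors)

namespace IsFareyPath

theorem pairwise_slopeLT (h : IsFareyPath u v L) : (u :: L ++ [v]).Pairwise SlopeLT :=
  (List.IsChain.imp (fun _ _ => FareyNeighbors.slopeLT) h).pairwise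

theorem wedge_left_pos (h : IsFareyPath u v L) (hw : w ∈ L) : 0 < wedge u w :=
  (List.rel_of_pairwise_cons h.pairwise_slopeLT (List.mem_append_left _ hw)).wedge_pos

theorem wedge_right_pos (h : IsFareyPath u v L) (hw : w ∈ L) : 0 < wedge w v :=
  ((List.pairwise_append.mp h.pairwise_slopeLT).2.2 w (List.mem_cons_of_mem u hw) v
    (List.mem_singleton_self v)).wedge_pos

theorem right_notMem (h : IsFareyPath u v L) : v ∉ L :=
  fun hv => (h.wedge_right_pos hv).ne' (wedge_self v)

theorem left_notMem (h : IsFareyPath u v L) : u ∉ L :=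
  fun hu => (h.wedge_left_pos hu).ne' (wedge_self u)

/-- In the basis `u`, `v` the mediant lies on the diagonal, and `x` strictly below it. A unimodular
step leaving the region below the diagonal can only land on the mediant, unless it goes from `u`
directly to `v`. -/
theorem mediant_mem_or_eq_nil (huv : wedge u v = 1) (hL : IsFareyPath x v L)
    (hux : 0 ≤ wedge u x) (hx : wedge u x < wedge x v) (hpos : ∀ y ∈ L, 0 < wedge u y) :
    u + v ∈ L ∨ L = [] ∧ wedge u x = 0 := by
  induction L generalizing x with
  | nil =>
    have := (isFareyPath_nil.mp hL).wedge_eq_one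
    exact .inr ⟨rfl, by omega⟩
  | cons y L ih =>
    have hyv : 0 < wedge y v := hL.wedge_right_pos List.mem_cons_self
    have huy : 0 < wedge u y := hpos y List.mem_cons_self
    obtain ⟨hxy, hL⟩ := isFareyPath_cons.mp hL
    left
    by_cases hy : wedge u y < wedge y v
    · rcases ih hL huy.le hy fun z hz => hpos z (List.mem_cons_of_mem y hz) with hmem | ⟨-, h0⟩
      · exact List.mem_cons_of_mem y hmem
      · exact absurd h0 huy.ne'
    · have hdet : wedge x v * wedge u y - wedge u x * wedge y v = 1 := by
        linear_combination hxy.wedge_eq_one + wedge x y * huv - wedge_plucker u x v y -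
          wedge u x * wedge_swap y v
      have huy_one : wedge u y = 1 := by nlinarith
      have hyv_one : wedge y v = 1 := by omega
      have hy_eq := eq_wedge_smul_add_wedge_smul huv y
      rw [huy_one, hyv_one, one_smul, one_smul] at hy_eq
      exact hy_eq ▸ List.mem_cons_self

theorem mediant_mem (huv : FareyNeighbors u v) (hL : IsFareyPath u v L) (hne : L ≠ []) :
    u + v ∈ L := by
  have huu : wedge u u < wedge u v := by rw [wedge_self, huv.wedge_eq_one]; exact one_pos
  exact (hL.mediant_mem_or_eq_nil huv.wedge_eq_one (wedge_self u).ge huu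
    fun _ => hL.wedge_left_pos).resolve_right fun h => hne h.1

end IsFareyPath

/-- The Stern–Brocot mediants between `u` and `v` selected by a binary tree, in in-order: the root
carries `u + v`, and its subtrees carry mediants of `u, u + v` and of `u + v, v`. -/
def mediants : BinaryTree Unit → ℤ × ℤ → ℤ × ℤ → List (ℤ × ℤ)
  | .nil, _, _ => []
  | .node _ l r, u, v => mediants l u (u + v) ++ (u + v) :: mediants r (u + v) v

theorem length_mediants (t : BinaryTree Unit) (u v : ℤ × ℤ) :
    (mediants t u v).length = t.numNodes := by
  induction t generalizing u v with
  | nil => rfl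
  | node _ l r ihl ihr =>
    simp only [mediants, BinaryTree.numNodes, List.length_append, List.length_cons, ihl, ihr]
    omega

theorem isFareyPath_mediants (t : BinaryTree Unit) (huv : FareyNeighbors u v) :
    IsFareyPath u v (mediants t u v) := by
  induction t generalizing u v with
  | nil => exact isFareyPath_nil.mpr huv
  | node _ l r ihl ihr =>
    exact isFareyPath_append_cons.mpr ⟨ihl huv.mediant_right, ihr huv.mediant_left⟩

theorem mediants_injective (huv : FareyNeighbors u v) :
    Function.Injective fun t => mediants t u v := by
  intro t
  induction t generalizing u v with
  | nil => rintro (_ | ⟨_, l', r'⟩) h <;> simp_all [mediants]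
  | node _ l r ihl ihr =>
    rintro (_ | ⟨_, l', r'⟩) h
    · simp [mediants] at h
    · have hl := isFareyPath_mediants l huv.mediant_right
      have hr := isFareyPath_mediants r huv.mediant_left
      obtain ⟨hl', -, hr'⟩ :=
        (List.append_cons_inj_of_notMem hl.right_notMem hr.left_notMem).mp h
      rw [ihl huv.mediant_right hl', ihr huv.mediant_left hr']

theorem IsFareyPath.exists_mediants_eq {u v : ℤ × ℤ} {L : List (ℤ × ℤ)}
    (huv : FareyNeighbors u v) (hL : IsFareyPath u v L) : ∃ t, mediants t u v = L := by
  by_cases hne : L = []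
  · exact ⟨.nil, hne.symm⟩
  obtain ⟨L₁, L₂, rfl⟩ := List.append_of_mem (hL.mediant_mem huv hne)
  obtain ⟨hL₁, hL₂⟩ := isFareyPath_append_cons.mp hL
  obtain ⟨l, rfl⟩ := IsFareyPath.exists_mediants_eq huv.mediant_right hL₁
  obtain ⟨r, rfl⟩ := IsFareyPath.exists_mediants_eq huv.mediant_left hL₂
  exact ⟨.node () l r, rfl⟩
termination_by L.length
decreasing_by all_goals grind

theorem ncard_setOf_isFareyPath (huv : FareyNeighbors u v) (n : ℕ) :
    {L | IsFareyPath u v L ∧ L.length = n}.ncard = catalan n := by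
  have himage : {L | IsFareyPath u v L ∧ L.length = n} =
      (fun t => mediants t u v) '' (BinaryTree.treesOfNumNodesEq n : Set (BinaryTree Unit)) := by
    ext L
    simp only [Set.mem_ofPred_eq, Set.mem_image, Finset.mem_coe, BinaryTree.mem_treesOfNumNodesEq]
    constructor
    · rintro ⟨hL, rfl⟩
      obtain ⟨t, rfl⟩ := hL.exists_mediants_eq huv
      exact ⟨t, (length_mediants t u v).symm, rfl⟩
    · rintro ⟨t, rfl, rfl⟩
      exact ⟨isFareyPath_mediants t huv, length_mediants t u v⟩
  rw [himage, Set.ncard_image_of_injective _ (mediants_injective huv), Set.ncard_coe_finset,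
    BinaryTree.treesOfNumNodesEq_card_eq_catalan]

end FareyPaths

section Antiperiodic

variable {M : Type*} [AddCommGroup M] {P : List M}

/-- The bi-infinite sequence that starts with the list `P` at index `0` and changes sign under a
shift by the length of `P`. -/
def antiperiodicExtension (P : List M) (z : ℤ) : M :=
  (z / P.length).negOnePow • P.getD (z % P.length).toNat 0

theorem antiperiodic_antiperiodicExtension (hP : P ≠ []) :
    Function.Antiperiodic (antiperiodicExtension P) (P.length : ℤ) := by
  intro z
  have hlen : (P.length : ℤ) ≠ 0 := by simpa using hP
  rw [antiperiodicExtension, Int.add_emod_right, Int.add_ediv_of_dvd_right dvd_rfl,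
    Int.ediv_self hlen, Int.negOnePow_succ, Units.neg_smul, antiperiodicExtension]

theorem antiperiodicExtension_natCast {r : ℕ} (hr : r < P.length) :
    antiperiodicExtension P r = P[r] := by
  rw [antiperiodicExtension, Int.ediv_eq_zero_of_lt (by omega) (by omega),
    Int.emod_eq_of_lt (by omega) (by omega), Int.negOnePow_zero, one_smul, Int.toNat_natCast,
    List.getD_eq_getElem _ _ hr]

theorem antiperiodicExtension_zero (hP : P ≠ []) : antiperiodicExtension P 0 = P.head hP := by
  rw [List.head_eq_getElem hP]
  exact antiperiodicExtension_natCast (List.length_pos_iff.mpr hP)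

theorem antiperiodicExtension_neg_one (hP : P ≠ []) :
    antiperiodicExtension P (-1) = -P.getLast hP := by
  have hlen : 0 < P.length := List.length_pos_iff.mpr hP
  rw [← neg_eq_iff_eq_neg, ← antiperiodic_antiperiodicExtension hP,
    show -1 + (P.length : ℤ) = (P.length - 1 : ℕ) by omega,
    antiperiodicExtension_natCast (by omega), List.getLast_eq_getElem hP]

theorem periodic_wedge_add_of_antiperiodic {R : Type*} [CommRing R] {V : ℤ → R × R} {c : ℤ}
    (hV : Function.Antiperiodic V c) (k : ℤ) :
    Function.Periodic (fun i => wedge (V i) (V (i + k))) c := by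
  intro i
  simp only [add_right_comm i c k, hV i, hV (i + k), wedge_neg_left, wedge_neg_right, neg_neg]

theorem wedge_antiperiodicExtension_pos {R : Type*} [CommRing R] [Preorder R] {P : List (R × R)}
    (hP : P.Pairwise fun v w => 0 < wedge v w) {i j : ℤ} (hij : i < j) (hji : j < i + P.length) :
    0 < wedge (antiperiodicExtension P i) (antiperiodicExtension P j) := by
  have hP₀ : P ≠ [] := by rintro rfl; rw [List.length_nil] at hji; omega
  have hanti := antiperiodic_antiperiodicExtension hP₀
  obtain ⟨r, ⟨hr₀, hr⟩, heq⟩ :=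
    (periodic_wedge_add_of_antiperiodic hanti (j - i)).exists_mem_Ico₀ (by omega) i
  simp only [add_sub_cancel] at heq
  rw [heq]
  lift r to ℕ using hr₀
  by_cases hs : r + (j - i) < P.length
  · obtain ⟨s, hs'⟩ : ∃ s : ℕ, r + (j - i) = s := ⟨(r + (j - i)).toNat, by omega⟩
    rw [hs', antiperiodicExtension_natCast (by omega), antiperiodicExtension_natCast (by omega)]
    exact List.pairwise_iff_getElem.mp hP r s (by omega) (by omega) (by omega)
  · obtain ⟨s, hs'⟩ : ∃ s : ℕ, r + (j - i) = s + P.length :=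
      ⟨(r + (j - i) - P.length).toNat, by omega⟩
    rw [hs', hanti, wedge_neg_right, ← wedge_swap, antiperiodicExtension_natCast (by omega),
      antiperiodicExtension_natCast (by omega)]
    exact List.pairwise_iff_getElem.mp hP s r (by omega) (by omega) (by omega)

theorem wedge_antiperiodicExtension_succ {R : Type*} [CommRing R] {P : List (R × R)} (hP : P ≠ [])
    (hchain : P.IsChain fun v w => wedge v w = 1)
    (hclose : wedge (P.head hP) (P.getLast hP) = 1) (i : ℤ) :
    wedge (antiperiodicExtension P i) (antiperiodicExtension P (i + 1)) = 1 := by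
  have hlen : 0 < P.length := List.length_pos_iff.mpr hP
  have hanti := antiperiodic_antiperiodicExtension hP
  obtain ⟨r, ⟨hr₀, hr⟩, heq⟩ :=
    (periodic_wedge_add_of_antiperiodic hanti 1).exists_mem_Ico₀ (by omega) i
  rw [heq]
  lift r to ℕ using hr₀
  rw [antiperiodicExtension_natCast (by omega)]
  by_cases hs : r + 1 < P.length
  · rw [← Nat.cast_succ, antiperiodicExtension_natCast hs]
    exact List.isChain_iff_getElem.mp hchain r hs
  · obtain rfl : r = P.length - 1 := by omega
    rw [show ((P.length - 1 : ℕ) : ℤ) + 1 = P.length by omega, hanti.eq,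
      antiperiodicExtension_zero hP, wedge_neg_right, ← wedge_swap, ← List.getLast_eq_getElem hP,
      hclose]

end Antiperiodic

namespace ClosedFrieze

variable {n : ℕ} {A B : ClosedFrieze n}

theorem a_congr {i : ℤ} (h : ∀ j, i < j → j < i + n + 3 → A.a i j = B.a i j) :
    A.a i = B.a i := by
  funext j
  by_cases hj : i < j ∧ j < i + n + 3
  · exact h j hj.1 hj.2
  · rw [A.outside i j (by omega), B.outside i j (by omega)]

theorem a_succ_eq_of_a_eq {i : ℤ} (hA : ∀ j, i < j → j < i + n + 3 → A.a i j ≠ 0)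
    (h : A.a i = B.a i) : A.a (i + 1) = B.a (i + 1) := by
  refine a_congr fun j hj => ?_
  rw [← Int.add_one_le_iff] at hj
  induction j, hj using Int.leInduction with
  | base => intro _; rw [A.topOne, B.topOne]
  | succ j hj ih =>
    intro hjn
    rcases (show j ≤ i + n + 2 by omega).lt_or_eq with hlt | rfl
    · have hdiamond := A.diamond i j (by omega) (by omega)
      rw [ih (by omega), h, ← B.diamond i j (by omega) (by omega)] at hdiamond
      exact mul_left_cancel₀ (h ▸ hA j (by omega) (by omega)) hdiamond
    · rw [show i + n + 2 + 1 = i + 1 + n + 2 by ring, A.botOne, B.botOne]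

theorem a_eq_of_a_succ_eq {i : ℤ} (hA : ∀ j, i + 1 < j → j < i + 1 + n + 3 → A.a (i + 1) j ≠ 0)
    (h : A.a (i + 1) = B.a (i + 1)) : A.a i = B.a i := by
  refine a_congr fun j hij hj => ?_
  replace hj : j ≤ i + n + 2 := by omega
  induction j, hj using Int.leInductionDown with
  | base => rw [A.botOne, B.botOne]
  | pred j hj ih =>
    rcases (show i + 1 ≤ j - 1 by omega).eq_or_lt with heq | hlt
    · rw [← heq, A.topOne, B.topOne]
    · have hdiamond := A.diamond i (j - 1) (by omega) (by omega)
      have hdiamond' := B.diamond i (j - 1) (by omega) (by omega)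
      rw [sub_add_cancel] at hdiamond hdiamond'
      rw [ih (by omega), h, ← hdiamond'] at hdiamond
      exact mul_right_cancel₀ (h ▸ hA j (by omega) (by omega)) hdiamond

theorem eq_of_a_zero_eq (hA : ∀ i j : ℤ, i < j → j < i + n + 3 → A.a i j ≠ 0)
    (h : A.a 0 = B.a 0) : A = B := by
  have ha : A.a = B.a := by
    funext i
    induction i using Int.induction_on with
    | zero => exact h
    | succ i ih => exact a_succ_eq_of_a_eq (hA i) ih
    | pred i ih => exact a_eq_of_a_succ_eq (hA _) (by rwa [sub_add_cancel])
  cases A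
  cases B
  cases ha
  rfl

namespace Arithmetic

theorem exists_pos_natCast_eq (hA : A.Arithmetic) {i j : ℤ} (hij : i < j) (hji : j < i + n + 3) :
    ∃ m : ℕ, 0 < m ∧ A.a i j = m := by
  rcases (Int.add_one_le_iff.mpr hij).eq_or_lt with rfl | hij'
  · exact ⟨1, one_pos, by simp [A.topOne]⟩
  rcases (show j ≤ i + n + 2 by omega).eq_or_lt with rfl | hji'
  · exact ⟨1, one_pos, by simp [A.botOne]⟩
  obtain ⟨k, hk⟩ : ∃ k : ℕ, j = i + k + 1 := ⟨(j - i - 1).toNat, by omega⟩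
  exact hk ▸ hA i k (by omega) (by omega)

theorem a_ne_zero (hA : A.Arithmetic) (i j : ℤ) (hij : i < j) (hji : j < i + n + 3) :
    A.a i j ≠ 0 := by
  obtain ⟨m, hm, heq⟩ := hA.exists_pos_natCast_eq hij hji
  rw [heq]
  positivity

theorem exists_natCast_eq (hA : A.Arithmetic) (i j : ℤ) : ∃ m : ℕ, A.a i j = m := by
  by_cases hij : i < j ∧ j < i + n + 3
  · obtain ⟨m, -, heq⟩ := hA.exists_pos_natCast_eq hij.1 hij.2
    exact ⟨m, heq⟩
  · exact ⟨0, by rw [A.outside i j (by omega), Nat.cast_zero]⟩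

theorem num_a (hA : A.Arithmetic) (i j : ℤ) : ((A.a i j).num : ℚ) = A.a i j := by
  obtain ⟨m, heq⟩ := hA.exists_natCast_eq i j
  simp [heq]

theorem num_a_nonneg (hA : A.Arithmetic) (i j : ℤ) : 0 ≤ (A.a i j).num := by
  obtain ⟨m, heq⟩ := hA.exists_natCast_eq i j
  simp [heq]

end Arithmetic

/-- The lattice point formed by the `j`-th entries of the diagonals `-1` and `0`. Numerators are
taken only to land in `ℤ`: the entries of an arithmetic frieze are integers. -/
def vertex (A : ClosedFrieze n) (j : ℤ) : ℤ × ℤ := ((A.a (-1) j).num, (A.a 0 j).num)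

theorem vertex_zero : A.vertex 0 = (1, 0) := by
  have htop := A.topOne (-1)
  rw [neg_add_cancel] at htop
  simp [vertex, htop, A.outside 0 0 (by omega)]

theorem vertex_width_add_two : A.vertex (n + 2) = (0, 1) := by
  have hbot := A.botOne 0
  rw [zero_add] at hbot
  simp [vertex, hbot, A.outside (-1) (n + 2) (by omega)]

theorem Arithmetic.fareyNeighbors_vertex (hA : A.Arithmetic) {j : ℤ} (hj : 0 ≤ j)
    (hjn : j ≤ n + 1) : FareyNeighbors (A.vertex j) (A.vertex (j + 1)) := by
  have hnonneg (k : ℤ) : 0 ≤ A.vertex k := ⟨hA.num_a_nonneg _ _, hA.num_a_nonneg _ _⟩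
  refine ⟨hnonneg j, hnonneg (j + 1), ?_⟩
  suffices A.a (-1) j * A.a 0 (j + 1) - A.a 0 j * A.a (-1) (j + 1) = 1 by
    rw [← Int.cast_inj (α := ℚ)]
    simpa [wedge, vertex, hA.num_a] using this
  rcases hj.eq_or_lt with rfl | hpos
  · have htop := A.topOne (-1)
    rw [neg_add_cancel] at htop
    rw [htop, A.topOne, A.outside 0 0 (by omega)]
    ring
  rcases hjn.eq_or_lt with rfl | hlt
  · have hbot := A.botOne (-1)
    have hbot' := A.botOne 0
    rw [show -1 + (n : ℤ) + 2 = n + 1 by ring] at hbot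
    rw [show 0 + (n : ℤ) + 2 = n + 1 + 1 by ring] at hbot'
    rw [hbot, hbot', A.outside (-1) _ (by omega)]
    ring
  · have hdiamond := A.diamond (-1) j (by omega) (by omega)
    rw [neg_add_cancel] at hdiamond
    linear_combination hdiamond

/-- The interior vertices `j = 1, …, n + 1`; the vertices `0` and `n + 2` are `(1, 0)` and
`(0, 1)` for every frieze. -/
def path (A : ClosedFrieze n) : List (ℤ × ℤ) :=
  (List.range (n + 1)).map fun k : ℕ => A.vertex (k + 1)

theorem length_path : A.path.length = n + 1 := by
  rw [path, List.length_map, List.length_range]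

theorem cons_path_append :
    (1, 0) :: A.path ++ [(0, 1)] = (List.range (n + 3)).map fun k : ℕ => A.vertex k := by
  rw [List.range_succ, List.range_succ_eq_map]
  simp [path, vertex_zero, vertex_width_add_two]

theorem Arithmetic.isFareyPath_path (hA : A.Arithmetic) : IsFareyPath (1, 0) (0, 1) A.path := by
  rw [IsFareyPath, cons_path_append, List.isChain_map, List.isChain_iff_getElem]
  intro k hk
  rw [List.length_range] at hk
  simpa using hA.fareyNeighbors_vertex (j := k) (by omega) (by omega)

theorem injOn_path : Set.InjOn path {A : ClosedFrieze n | A.Arithmetic} := by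
  intro A hA B hB hAB
  refine eq_of_a_zero_eq hA.a_ne_zero (a_congr fun j hj hjn => ?_)
  have hvertices : ((List.range (n + 3)).map fun k : ℕ => A.vertex k) =
      (List.range (n + 3)).map fun k : ℕ => B.vertex k := by
    rw [← cons_path_append, hAB, cons_path_append]
  have hvertex := List.map_inj_left.mp hvertices j.toNat (List.mem_range.mpr (by omega))
  rw [Int.toNat_of_nonneg hj.le] at hvertex
  rw [← hA.num_a, ← hB.num_a]
  exact congrArg (fun v : ℤ × ℤ => (v.2 : ℚ)) hvertex

/-- The frieze of determinants of an antiperiodic unimodular sequence of vectors. -/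
def ofAntiperiodic (V : ℤ → ℤ × ℤ) (hV : Function.Antiperiodic V (n + 3))
    (hstep : ∀ i, wedge (V i) (V (i + 1)) = 1) : ClosedFrieze n where
  a i j := if i < j ∧ j < i + n + 3 then ((wedge (V i) (V j) : ℤ) : ℚ) else 0
  diamond i j hij hji := by
    rw [if_pos (by omega), if_pos (by omega), if_pos (by omega), if_pos (by omega)]
    have hplucker := wedge_plucker (V i) (V (i + 1)) (V j) (V (j + 1))
    rw [hstep, hstep, one_mul] at hplucker
    exact_mod_cast hplucker
  topOne i := by
    rw [if_pos (by omega), hstep, Int.cast_one]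
  botOne i := by
    have hshift : V (i + n + 2) = -V (i - 1) := by rw [← hV]; congr 1; ring
    have hpred := hstep (i - 1)
    rw [sub_add_cancel] at hpred
    rw [if_pos (by omega), hshift, wedge_neg_right, ← wedge_swap, hpred, Int.cast_one]
  outside i j hij := if_neg (by omega)

section OfAntiperiodic

variable {V : ℤ → ℤ × ℤ} {hV : Function.Antiperiodic V (n + 3)}
  {hstep : ∀ i, wedge (V i) (V (i + 1)) = 1}

theorem ofAntiperiodic_a {i j : ℤ} (hij : i < j) (hji : j < i + n + 3) :
    (ofAntiperiodic V hV hstep).a i j = wedge (V i) (V j) :=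
  if_pos ⟨hij, hji⟩

theorem arithmetic_ofAntiperiodic
    (hpos : ∀ i j : ℤ, i < j → j < i + n + 3 → 0 < wedge (V i) (V j)) :
    (ofAntiperiodic V hV hstep).Arithmetic := by
  intro i k hk hkn
  have hwedge := hpos i (i + k + 1) (by omega) (by omega)
  refine ⟨(wedge (V i) (V (i + k + 1))).toNat, by omega, ?_⟩
  rw [ofAntiperiodic_a (by omega) (by omega)]
  exact_mod_cast (Int.toNat_of_nonneg hwedge.le).symm

theorem vertex_ofAntiperiodic (hV₀ : V 0 = (1, 0)) (hV₁ : V (-1) = (0, -1)) {j : ℤ} (hj : 0 < j)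
    (hjn : j < n + 2) : (ofAntiperiodic V hV hstep).vertex j = V j := by
  rw [vertex, ofAntiperiodic_a (by omega) (by omega), ofAntiperiodic_a (by omega) (by omega), hV₀,
    hV₁, Rat.num_intCast, Rat.num_intCast]
  simp [wedge]

end OfAntiperiodic

theorem exists_arithmetic_path_eq {L : List (ℤ × ℤ)} (hL : IsFareyPath (1, 0) (0, 1) L)
    (hlen : L.length = n + 1) : ∃ A : ClosedFrieze n, A.Arithmetic ∧ A.path = L := by
  set P : List (ℤ × ℤ) := (1, 0) :: L ++ [(0, 1)]
  have hPlen : P.length = n + 3 := by simp [P, hlen]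
  have hPne : P ≠ [] := by simp [P]
  have hanti : Function.Antiperiodic (antiperiodicExtension P) ((n : ℤ) + 3) := by
    simpa [hPlen] using antiperiodic_antiperiodicExtension hPne
  have hstep := wedge_antiperiodicExtension_succ hPne
    (List.IsChain.imp (fun _ _ => FareyNeighbors.wedge_eq_one) hL) (by simp [P, wedge])
  have hsorted : P.Pairwise fun v w => 0 < wedge v w := hL.pairwise_slopeLT.imp SlopeLT.wedge_pos
  have hpos (i j : ℤ) (hij : i < j) (hji : j < i + n + 3) :
      0 < wedge (antiperiodicExtension P i) (antiperiodicExtension P j) :=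
    wedge_antiperiodicExtension_pos hsorted hij (by omega)
  have hzero : antiperiodicExtension P 0 = (1, 0) := antiperiodicExtension_zero hPne
  have hneg_one : antiperiodicExtension P (-1) = (0, -1) := by
    rw [antiperiodicExtension_neg_one hPne]
    simp [P]
  refine ⟨ofAntiperiodic _ hanti hstep, arithmetic_ofAntiperiodic hpos, ?_⟩
  refine List.ext_getElem (by rw [length_path, hlen]) fun k hk hk' => ?_
  rw [length_path] at hk
  have hentry : antiperiodicExtension P (k + 1) = L[k] := by
    rw [← Nat.cast_succ, antiperiodicExtension_natCast (by omega)]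
    simp [P, hk']
  have hvertex := vertex_ofAntiperiodic (hV := hanti) (hstep := hstep) hzero hneg_one (j := k + 1)
    (by omega) (by omega)
  simp [path, hvertex, hentry]

theorem ncard_setOf_arithmetic (n : ℕ) :
    {A : ClosedFrieze n | A.Arithmetic}.ncard = catalan (n + 1) := by
  have himage : path '' {A : ClosedFrieze n | A.Arithmetic} =
      {L | IsFareyPath (1, 0) (0, 1) L ∧ L.length = n + 1} := by
    ext L
    constructor
    · rintro ⟨A, hA, rfl⟩
      exact ⟨hA.isFareyPath_path, length_path⟩
    · rintro ⟨hL, hlen⟩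
      exact exists_arithmetic_path_eq hL hlen
  have hends : FareyNeighbors (1, 0) (0, 1) := ⟨by decide, by decide, by decide⟩
  rw [← injOn_path.ncard_image, himage, ncard_setOf_isFareyPath hends]

end ClosedFrieze

/-- The number of arithmetic frieze patterns of width `n` equals the Catalan number
`C_{n+1} = (1/(n+2))·binom(2n+2, n+1)`. -/
theorem stmt15 (n : ℕ) (hn : 1 ≤ n) :
    {A : ClosedFrieze n | A.Arithmetic}.ncard = (2 * n + 2).choose (n + 1) / (n + 2) := by
  rw [ClosedFrieze.ncard_setOf_arithmetic, catalan_eq_centralBinom_div, Nat.centralBinom]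
  rfl
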